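/- The function ε2(τ) = θ1(0,τ)^4 θ3(0,τ)^4/16 is a modular form of weight 4 over the congruence subgroup Γ^0(2): it is holomorphic on the upper half-plane, holomorphic at the cusps, and satisfies ε2((aτ+b)/(cτ+d)) = (cτ+d)^4 ε2(τ) for every (a b; c d) ∈ Γ^0(2). -/

import Mathlib

open Complex Real Matrix Matrix.SpecialLinearGroup

local notation "SL(2,ℤ)" => Matrix.SpecialLinearGroup (Fin 2) ℤ
local notation "ℍ" => UpperHalfPlane

/-- The nome `q = e^{2πiτ}`. -/
noncomputable def qq (τ : ℂ) : ℂ := Complex.exp (2 * π * Complex.I * τ)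

/-- The half-nome `q^{1/2} = e^{πiτ}`. -/
noncomputable def qh (τ : ℂ) : ℂ := Complex.exp (π * Complex.I * τ)

/-- The Jacobi theta constant `θ₁(0,τ) = 2 q^{1/8} ∏_{j≥1} (1-q^j)(1+q^j)^2`. -/
noncomputable def theta1 (τ : ℂ) : ℂ :=
  2 * Complex.exp (π * Complex.I * τ / 4) *
    ∏' j : ℕ, ((1 - qq τ ^ (j + 1)) * (1 + qq τ ^ (j + 1)) ^ 2)

/-- The Jacobi theta constant `θ₃(0,τ) = ∏_{j≥1} (1-q^j)(1+q^{j-1/2})^2`. -/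
noncomputable def theta3 (τ : ℂ) : ℂ :=
  ∏' j : ℕ, ((1 - qq τ ^ (j + 1)) * (1 + qh τ ^ (2 * j + 1)) ^ 2)

/-- `ε₂(τ) = θ₁(0,τ)⁴ θ₃(0,τ)⁴/16`. -/
noncomputable def epsilon2 (τ : ℂ) : ℂ := theta1 τ ^ 4 * theta3 τ ^ 4 / 16

/-- `Γ^0(N)`: the congruence subgroup of `SL(2, ℤ)` of matrices whose upper right-hand entry
reduces to zero modulo `N`. -/
def GammaUpper0 (N : ℕ) : Subgroup SL(2,ℤ) where
  carrier := { g | (g 0 1 : ZMod N) = 0 }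
  one_mem' := by simp
  mul_mem' := by
    intro a b ha hb
    simp only [Set.mem_setOf_eq]
    have h := (Matrix.two_mul_expl a.1 b.1).2.1
    simp only [coe_matrix_coe, coe_mul, Int.coe_castRingHom, map_apply, Set.mem_setOf_eq] at *
    rw [h]
    simp [ha, hb]
  inv_mem' := by
    intro a ha
    simp only [Set.mem_setOf_eq]
    rw [SL2_inv_expl a]
    simp only [cons_val_zero, cons_val_one, head_cons, coe_matrix_coe,
      coe_mk, Int.coe_castRingHom, map_apply, Int.cast_neg, neg_eq_zero, Set.mem_setOf_eq] at *
    exact ha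

/-!
Together with `ε₁ = θ₂⁴θ₃⁴/16` and `ε₃ = -θ₁⁴θ₂⁴/16`, the function `ε₂` forms a set of three
functions which `S` and `T`, and hence all of `SL₂(ℤ)`, permute in weight `4`, exactly as they
permute the nonzero row vectors modulo `2`. The vector of `ε₂` is `(1, 0)`, whose stabilizer is
`Γ^0(2)`, and boundedness at every cusp reduces to boundedness of all three functions at `∞`.
The action of `T` is visible on the products. For `S`, Jacobi's identity `θ₁θ₂θ₃ = 2η³` makes
`θ₁`, `θ₂`, `θ₃` quotients of `η(τ/2)`, `η(τ)`, `η(2τ)`, which the inversion formula of `η`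
permutes; working with squares avoids choosing a branch of the square root.
-/

open Filter Topology ModularForm Manifold
open UpperHalfPlane (upperHalfPlaneSet atImInfty IsBoundedAtImInfty)

/-! ### The Euler product -/

/-- Euler's product `∏_{n ≥ 1} (1 - q^n)`, in which all theta constants are expressed. -/
noncomputable def eulerProd (q : ℂ) : ℂ := ∏' n : ℕ, (1 - q ^ (n + 1))

section EulerProd

variable {q : ℂ}

lemma summable_norm_pow_succ (hq : ‖q‖ < 1) : Summable fun n : ℕ ↦ ‖q ^ (n + 1)‖ := by
  simpa using (summable_nat_add_iff 1).mpr (summable_geometric_of_lt_one (norm_nonneg q) hq)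

lemma multipliable_one_add_pow (hq : ‖q‖ < 1) : Multipliable fun n : ℕ ↦ 1 + q ^ (n + 1) :=
  multipliable_one_add_of_summable (summable_norm_pow_succ hq)

lemma multipliable_one_sub_pow_odd (hq : ‖q‖ < 1) :
    Multipliable fun n : ℕ ↦ 1 - q ^ (2 * n + 1) := by
  have hodd : Summable fun n : ℕ ↦ ‖q ^ (2 * n + 1)‖ :=
    (summable_norm_pow_succ hq).comp_injective (mul_right_injective₀ two_ne_zero)
  simpa [sub_eq_add_neg] using
    multipliable_one_add_of_summable (f := fun n : ℕ ↦ -q ^ (2 * n + 1)) (by simpa using hodd)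

lemma norm_pow_lt_one (hq : ‖q‖ < 1) {n : ℕ} (hn : n ≠ 0) : ‖q ^ n‖ < 1 := by
  simpa using pow_lt_one₀ (norm_nonneg q) hq hn

lemma eulerProd_ne_zero (hq : ‖q‖ < 1) : eulerProd q ≠ 0 := by
  refine tprod_one_add_ne_zero_of_summable (f := fun n : ℕ ↦ -q ^ (n + 1)) (fun n h ↦ ?_)
    (by simpa using summable_norm_pow_succ hq)
  have hpow : q ^ (n + 1) = 1 := by linear_combination -h
  simpa [hpow] using norm_pow_lt_one hq n.succ_ne_zero

lemma tendsto_eulerProd_zero : Tendsto eulerProd (𝓝 0) (𝓝 1) := by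
  have hcont : ContinuousAt eulerProd 0 :=
    (differentiableOn_tprod_one_sub_pow.differentiableAt
      (Metric.ball_mem_nhds 0 one_pos)).continuousAt
  simpa [ContinuousAt, eulerProd] using hcont

lemma eulerProd_mul_tprod_one_add_pow (hq : ‖q‖ < 1) :
    eulerProd q * ∏' n : ℕ, (1 + q ^ (n + 1)) = eulerProd (q ^ 2) := by
  rw [eulerProd, eulerProd,
    ← (multipliable_one_sub_pow hq).tprod_mul (multipliable_one_add_pow hq)]
  exact tprod_congr fun n ↦ by ring

lemma tprod_one_sub_pow_odd_mul_eulerProd_sq (hq : ‖q‖ < 1) :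
    (∏' n : ℕ, (1 - q ^ (2 * n + 1))) * eulerProd (q ^ 2) = eulerProd q := by
  have heven (n : ℕ) : 1 - (q ^ 2) ^ (n + 1) = 1 - q ^ (2 * n + 1 + 1) := by ring
  have hmult := multipliable_one_sub_pow (norm_pow_lt_one hq two_ne_zero)
  simp only [eulerProd, heven] at hmult ⊢
  exact tprod_even_mul_odd (f := fun n ↦ 1 - q ^ (n + 1)) (multipliable_one_sub_pow_odd hq) hmult

lemma tprod_one_sub_pow_odd_mul_neg (hq : ‖q‖ < 1) :
    (∏' n : ℕ, (1 - q ^ (2 * n + 1))) * ∏' n : ℕ, (1 - (-q) ^ (2 * n + 1)) =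
      ∏' n : ℕ, (1 - (q ^ 2) ^ (2 * n + 1)) := by
  rw [← (multipliable_one_sub_pow_odd hq).tprod_mul
    (multipliable_one_sub_pow_odd (by simpa using hq))]
  exact tprod_congr fun n ↦ by
    rw [Odd.neg_pow ⟨n, rfl⟩]
    ring

lemma eulerProd_mul_eulerProd_neg_mul (hq : ‖q‖ < 1) :
    eulerProd q * eulerProd (-q) * eulerProd (q ^ 4) = eulerProd (q ^ 2) ^ 3 := by
  have hpos := tprod_one_sub_pow_odd_mul_eulerProd_sq hq
  have hneg := tprod_one_sub_pow_odd_mul_eulerProd_sq (q := -q) (by simpa using hq)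
  have hsq := tprod_one_sub_pow_odd_mul_eulerProd_sq (norm_pow_lt_one hq two_ne_zero)
  rw [neg_sq] at hneg
  rw [← pow_mul, ← tprod_one_sub_pow_odd_mul_neg hq] at hsq
  rw [← hpos, ← hneg]
  linear_combination eulerProd (q ^ 2) ^ 2 * hsq

lemma tprod_one_sub_mul_one_add_sq (hq : ‖q‖ < 1) :
    ∏' n : ℕ, (1 - q ^ (n + 1)) * (1 + q ^ (n + 1)) ^ 2 =
      eulerProd (q ^ 2) ^ 2 / eulerProd q := by
  have hplus := multipliable_one_add_pow hq
  rw [(multipliable_one_sub_pow hq).tprod_mul (hplus.pow 2), hplus.tprod_pow, ← eulerProd,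
    ← eulerProd_mul_tprod_one_add_pow hq]
  field_simp [eulerProd_ne_zero hq]

lemma tprod_one_sub_mul_one_sub_odd_sq (hq : ‖q‖ < 1) :
    ∏' n : ℕ, (1 - (q ^ 2) ^ (n + 1)) * (1 - q ^ (2 * n + 1)) ^ 2 =
      eulerProd q ^ 2 / eulerProd (q ^ 2) := by
  have hsq := norm_pow_lt_one hq two_ne_zero
  have hodd := multipliable_one_sub_pow_odd hq
  rw [(multipliable_one_sub_pow hsq).tprod_mul (hodd.pow 2), hodd.tprod_pow, ← eulerProd,
    ← tprod_one_sub_pow_odd_mul_eulerProd_sq hq]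
  field_simp [eulerProd_ne_zero hsq]

end EulerProd

/-! ### Theta constants as eta quotients -/

/-- The Jacobi theta constant `θ₂(0,τ) = ∏_{j≥1} (1-q^j)(1-q^{j-1/2})^2`, to which `S` and `T`
take `θ₁` and `θ₃`. -/
noncomputable def theta2 (τ : ℂ) : ℂ :=
  ∏' j : ℕ, ((1 - qq τ ^ (j + 1)) * (1 - qh τ ^ (2 * j + 1)) ^ 2)

lemma qq_eq_qh_sq (τ : ℂ) : qq τ = qh τ ^ 2 := by
  rw [qq, qh, ← Complex.exp_nat_mul]
  ring_nf

lemma qh_add_one (τ : ℂ) : qh (τ + 1) = -qh τ := by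
  simp [qh, mul_add, Complex.exp_add]

lemma theta1_add_one (τ : ℂ) : theta1 (τ + 1) = Complex.exp (π * Complex.I / 4) * theta1 τ := by
  simp only [theta1, qq_eq_qh_sq, qh_add_one, neg_sq, mul_add, mul_one, add_div, Complex.exp_add]
  ring

lemma theta2_add_one (τ : ℂ) : theta2 (τ + 1) = theta3 τ := by
  simp only [theta2, theta3, qq_eq_qh_sq, qh_add_one, neg_sq]
  exact tprod_congr fun j ↦ by rw [Odd.neg_pow ⟨j, rfl⟩, sub_neg_eq_add]

lemma theta3_add_one (τ : ℂ) : theta3 (τ + 1) = theta2 τ := by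
  simp only [theta2, theta3, qq_eq_qh_sq, qh_add_one, neg_sq]
  exact tprod_congr fun j ↦ by
    rw [Odd.neg_pow ⟨j, rfl⟩]
    ring

lemma eta_eq_exp_mul_eulerProd (τ : ℂ) :
    η τ = Complex.exp (π * Complex.I * τ / 12) * eulerProd (qh τ ^ 2) := by
  rw [← qq_eq_qh_sq, ModularForm.eta, eulerProd]
  simp only [eta_q_eq_pow, Function.Periodic.qParam, qq]
  congr 2
  push_cast
  ring

section UpperHalfPlane

variable {τ : ℂ}

lemma norm_qh_lt_one (hτ : 0 < τ.im) : ‖qh τ‖ < 1 := by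
  simpa [qh, Complex.norm_exp] using mul_pos Real.pi_pos hτ

lemma theta1_eq_eulerProd (hτ : 0 < τ.im) :
    theta1 τ = 2 * Complex.exp (π * Complex.I * τ / 4) *
      (eulerProd (qh τ ^ 4) ^ 2 / eulerProd (qh τ ^ 2)) := by
  rw [theta1, qq_eq_qh_sq,
    tprod_one_sub_mul_one_add_sq (norm_pow_lt_one (norm_qh_lt_one hτ) two_ne_zero), ← pow_mul]

lemma theta2_eq_eulerProd (hτ : 0 < τ.im) :
    theta2 τ = eulerProd (qh τ) ^ 2 / eulerProd (qh τ ^ 2) := by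
  rw [theta2, qq_eq_qh_sq, tprod_one_sub_mul_one_sub_odd_sq (norm_qh_lt_one hτ)]

lemma theta3_eq_eulerProd (hτ : 0 < τ.im) :
    theta3 τ = eulerProd (-qh τ) ^ 2 / eulerProd (qh τ ^ 2) := by
  rw [← theta2_add_one, theta2_eq_eulerProd (by simpa using hτ), qh_add_one, neg_sq]

lemma theta1_mul_theta2_mul_theta3 (hτ : 0 < τ.im) :
    theta1 τ * theta2 τ * theta3 τ = 2 * η τ ^ 3 := by
  have hq := norm_qh_lt_one hτ
  have hP := eulerProd_ne_zero (norm_pow_lt_one hq two_ne_zero)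
  have hexp : Complex.exp (π * Complex.I * τ / 12) ^ 3 = Complex.exp (π * Complex.I * τ / 4) := by
    rw [← Complex.exp_nat_mul]
    ring_nf
  rw [theta1_eq_eulerProd hτ, theta2_eq_eulerProd hτ, theta3_eq_eulerProd hτ,
    eta_eq_exp_mul_eulerProd, mul_pow, hexp]
  calc _ = 2 * Complex.exp (π * Complex.I * τ / 4) *
        ((eulerProd (qh τ) * eulerProd (-qh τ) * eulerProd (qh τ ^ 4)) ^ 2 /
          eulerProd (qh τ ^ 2) ^ 3) := by ring
    _ = _ := by rw [eulerProd_mul_eulerProd_neg_mul hq]; field_simp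

lemma theta1_eq_eta (hτ : 0 < τ.im) : theta1 τ = 2 * η (2 * τ) ^ 2 / η τ := by
  have hexp : Complex.exp (π * Complex.I * (2 * τ) / 12) ^ 2 =
      Complex.exp (π * Complex.I * τ / 12) * Complex.exp (π * Complex.I * τ / 4) := by
    rw [← Complex.exp_nat_mul, ← Complex.exp_add]
    ring_nf
  have hqh : qh (2 * τ) ^ 2 = qh τ ^ 4 := by
    simp only [qh, ← Complex.exp_nat_mul]
    ring_nf
  rw [theta1_eq_eulerProd hτ, eta_eq_exp_mul_eulerProd, eta_eq_exp_mul_eulerProd, hqh, mul_pow,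
    hexp]
  field_simp

lemma theta2_eq_eta (hτ : 0 < τ.im) : theta2 τ = η (τ / 2) ^ 2 / η τ := by
  have hexp : Complex.exp (π * Complex.I * (τ / 2) / 12) ^ 2 =
      Complex.exp (π * Complex.I * τ / 12) := by
    rw [← Complex.exp_nat_mul]
    ring_nf
  have hqh : qh (τ / 2) ^ 2 = qh τ := by
    simp only [qh, ← Complex.exp_nat_mul]
    ring_nf
  rw [theta2_eq_eulerProd hτ, eta_eq_exp_mul_eulerProd, eta_eq_exp_mul_eulerProd, hqh, mul_pow,
    hexp]
  field_simp

lemma im_two_mul_pos (hτ : 0 < τ.im) : 0 < (2 * τ).im := by simpa using hτ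

lemma im_div_two_pos (hτ : 0 < τ.im) : 0 < (τ / 2).im := by simpa using hτ

lemma theta3_eq_eta (hτ : 0 < τ.im) :
    theta3 τ = η τ ^ 5 / (η (τ / 2) ^ 2 * η (2 * τ) ^ 2) := by
  have h₀ := eta_ne_zero hτ
  have h₁ := eta_ne_zero (im_two_mul_pos hτ)
  have h₂ := eta_ne_zero (im_div_two_pos hτ)
  have hprod := theta1_mul_theta2_mul_theta3 hτ
  rw [theta1_eq_eta hτ, theta2_eq_eta hτ] at hprod
  field_simp at hprod ⊢
  linear_combination hprod

end UpperHalfPlane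

/-! ### The inversion `τ ↦ -1/τ` -/

section UpperHalfPlane

variable {τ : ℂ}

lemma im_neg_one_div_pos (hτ : 0 < τ.im) : 0 < (-1 / τ).im := by
  simpa [neg_div, inv_neg] using UpperHalfPlane.im_inv_neg_coe_pos ⟨τ, hτ⟩

lemma eta_neg_one_div_sq (hτ : 0 < τ.im) : η (-1 / τ) ^ 2 = -Complex.I * τ * η τ ^ 2 := by
  have hsqrt (z : ℂ) : Complex.sqrt z ^ 2 = z := Complex.cpow_nat_inv_pow z two_ne_zero
  have heta : η (-1 / τ) = (Complex.sqrt Complex.I)⁻¹ * (Complex.sqrt τ * η τ) :=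
    eta_comp_eq_csqrt_I_inv hτ
  rw [heta, mul_pow, mul_pow, inv_pow, hsqrt, hsqrt, Complex.inv_I, mul_assoc]

lemma eta_two_mul_neg_one_div_sq (hτ : 0 < τ.im) :
    η (2 * (-1 / τ)) ^ 2 = -Complex.I * τ / 2 * η (τ / 2) ^ 2 := by
  rw [show 2 * (-1 / τ) = -1 / (τ / 2) by field_simp, eta_neg_one_div_sq (im_div_two_pos hτ),
    mul_div_assoc]

lemma eta_neg_one_div_div_two_sq (hτ : 0 < τ.im) :
    η (-1 / τ / 2) ^ 2 = -2 * Complex.I * τ * η (2 * τ) ^ 2 := by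
  rw [div_div, mul_comm τ, eta_neg_one_div_sq (im_two_mul_pos hτ)]
  ring

lemma theta1_neg_one_div_sq (hτ : 0 < τ.im) :
    theta1 (-1 / τ) ^ 2 = -Complex.I * τ * theta2 τ ^ 2 := by
  have h := eta_ne_zero hτ
  have hτ₀ : τ ≠ 0 := by rintro rfl; simp at hτ
  rw [theta1_eq_eta (im_neg_one_div_pos hτ), theta2_eq_eta hτ, div_pow, eta_neg_one_div_sq hτ,
    eta_two_mul_neg_one_div_sq hτ]
  field_simp

lemma theta2_neg_one_div_sq (hτ : 0 < τ.im) :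
    theta2 (-1 / τ) ^ 2 = -Complex.I * τ * theta1 τ ^ 2 := by
  have h := eta_ne_zero hτ
  have hτ₀ : τ ≠ 0 := by rintro rfl; simp at hτ
  rw [theta2_eq_eta (im_neg_one_div_pos hτ), theta1_eq_eta hτ, div_pow, eta_neg_one_div_sq hτ,
    eta_neg_one_div_div_two_sq hτ]
  field_simp

lemma theta3_neg_one_div_sq (hτ : 0 < τ.im) :
    theta3 (-1 / τ) ^ 2 = -Complex.I * τ * theta3 τ ^ 2 := by
  have h := eta_ne_zero hτ
  have h₁ := eta_ne_zero (im_two_mul_pos hτ)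
  have h₂ := eta_ne_zero (im_div_two_pos hτ)
  have hτ₀ : τ ≠ 0 := by rintro rfl; simp at hτ
  rw [theta3_eq_eta (im_neg_one_div_pos hτ), theta3_eq_eta hτ, div_pow, ← pow_mul,
    mul_comm 5 2, pow_mul, eta_neg_one_div_sq hτ, eta_neg_one_div_div_two_sq hτ,
    eta_two_mul_neg_one_div_sq hτ]
  field_simp

end UpperHalfPlane

/-! ### Holomorphy and behaviour at infinity -/

lemma differentiableOn_eta_mul {c : ℝ} (hc : 0 < c) :
    DifferentiableOn ℂ (fun τ ↦ η (c * τ)) upperHalfPlaneSet := fun τ hτ ↦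
  have hcτ : (c * τ : ℂ) ∈ upperHalfPlaneSet := by simpa using mul_pos hc hτ
  ((differentiableAt_eta_of_mem_upperHalfPlaneSet hcτ).comp (f := fun τ : ℂ ↦ c * τ) τ
    (by fun_prop)).differentiableWithinAt

lemma differentiableOn_theta1 : DifferentiableOn ℂ theta1 upperHalfPlaneSet := by
  refine DifferentiableOn.congr ?_ fun τ hτ ↦ theta1_eq_eta hτ
  have h₁ := differentiableOn_eta_mul one_pos
  have h₂ := differentiableOn_eta_mul two_pos
  simp only [Complex.ofReal_one, one_mul, Complex.ofReal_ofNat] at h₁ h₂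
  exact ((h₂.pow 2).const_mul 2).fun_div h₁ fun τ hτ ↦ eta_ne_zero hτ

lemma differentiableOn_theta3 : DifferentiableOn ℂ theta3 upperHalfPlaneSet := by
  refine DifferentiableOn.congr ?_ fun τ hτ ↦ theta3_eq_eta hτ
  have h₁ := differentiableOn_eta_mul one_pos
  have h₂ := differentiableOn_eta_mul two_pos
  have h₃ := differentiableOn_eta_mul (c := 2⁻¹) (by norm_num)
  simp only [Complex.ofReal_one, one_mul, Complex.ofReal_ofNat, Complex.ofReal_inv,
    inv_mul_eq_div] at h₁ h₂ h₃
  exact (h₁.pow 5).fun_div ((h₃.pow 2).mul (h₂.pow 2)) fun τ hτ ↦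
    mul_ne_zero (pow_ne_zero 2 (eta_ne_zero (im_div_two_pos hτ)))
      (pow_ne_zero 2 (eta_ne_zero (im_two_mul_pos hτ)))

lemma mdifferentiable_coe_of_differentiableOn {F : ℂ → ℂ}
    (hF : DifferentiableOn ℂ F upperHalfPlaneSet) : MDiff (fun τ : ℍ ↦ F τ) :=
  UpperHalfPlane.mdifferentiable_iff.mpr <| hF.congr fun τ hτ ↦ by
    simp [UpperHalfPlane.ofComplex_apply_of_im_pos hτ]

lemma mdifferentiable_epsilon2 : MDiff (fun τ : ℍ ↦ epsilon2 τ) :=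
  mdifferentiable_coe_of_differentiableOn <|
    ((differentiableOn_theta1.pow 4).mul (differentiableOn_theta3.pow 4)).div_const 16

lemma isBoundedAtImInfty_of_tendsto {f : ℍ → ℂ} {c : ℂ} (h : Tendsto f atImInfty (𝓝 c)) :
    IsBoundedAtImInfty f := h.isBigO_one ℝ

lemma tendsto_qh_atImInfty : Tendsto (fun τ : ℍ ↦ qh τ) atImInfty (𝓝 0) := by
  refine (UpperHalfPlane.qParam_tendsto_atImInfty two_pos).congr fun τ ↦ ?_
  simp only [qh, Function.Periodic.qParam]
  congr 1
  push_cast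
  ring

lemma tendsto_eulerProd_qh_pow {n : ℕ} (hn : n ≠ 0) :
    Tendsto (fun τ : ℍ ↦ eulerProd (qh τ ^ n)) atImInfty (𝓝 1) :=
  tendsto_eulerProd_zero.comp (by simpa [hn] using tendsto_qh_atImInfty.pow n)

lemma tendsto_theta1_atImInfty : Tendsto (fun τ : ℍ ↦ theta1 τ) atImInfty (𝓝 0) := by
  have hexp : Tendsto (fun τ : ℍ ↦ Complex.exp (π * Complex.I * τ / 4)) atImInfty (𝓝 0) := by
    refine (UpperHalfPlane.qParam_tendsto_atImInfty (h := 8) (by norm_num)).congr fun τ ↦ ?_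
    simp only [Function.Periodic.qParam]
    congr 1
    push_cast
    ring
  have hquot := ((tendsto_eulerProd_qh_pow four_ne_zero).pow 2).div
    (tendsto_eulerProd_qh_pow two_ne_zero) one_ne_zero
  simpa [theta1_eq_eulerProd (UpperHalfPlane.im_pos _), Pi.div_def] using
    (hexp.const_mul 2).mul hquot

lemma tendsto_theta2_atImInfty : Tendsto (fun τ : ℍ ↦ theta2 τ) atImInfty (𝓝 1) := by
  have hquot := ((tendsto_eulerProd_qh_pow one_ne_zero).pow 2).div
    (tendsto_eulerProd_qh_pow two_ne_zero) one_ne_zero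
  simpa [theta2_eq_eulerProd (UpperHalfPlane.im_pos _), Pi.div_def] using hquot

lemma tendsto_theta3_atImInfty : Tendsto (fun τ : ℍ ↦ theta3 τ) atImInfty (𝓝 1) := by
  have hneg : Tendsto (fun τ : ℍ ↦ eulerProd (-qh τ)) atImInfty (𝓝 1) :=
    tendsto_eulerProd_zero.comp (by simpa using tendsto_qh_atImInfty.neg)
  have hquot := (hneg.pow 2).div (tendsto_eulerProd_qh_pow two_ne_zero) one_ne_zero
  simpa [theta3_eq_eulerProd (UpperHalfPlane.im_pos _), Pi.div_def] using hquot

/-! ### The orbit of `ε₂` -/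

/-- The companion `ε₁(τ) = θ₂(0,τ)⁴ θ₃(0,τ)⁴/16` of `ε₂`, its transform under `S`. -/
noncomputable def epsilon1 (τ : ℂ) : ℂ := theta2 τ ^ 4 * theta3 τ ^ 4 / 16

/-- The companion `ε₃(τ) = -θ₁(0,τ)⁴ θ₂(0,τ)⁴/16` of `ε₂`, its transform under `T`. The sign
comes from the factor `e^{πi/4}` that `θ₁` acquires under `T`. -/
noncomputable def epsilon3 (τ : ℂ) : ℂ := -(theta1 τ ^ 4 * theta2 τ ^ 4) / 16

/-- The `SL₂(ℤ)`-orbit of `ε₂` up to automorphy factors, indexed by the nonzero row vectors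
modulo `2` so that `SL₂(ℤ)` permutes the three functions by right multiplication; the zero vector
is sent to `0`. -/
noncomputable def epsilonOrbit (v : Fin 2 → ZMod 2) : ℂ → ℂ :=
  if v 0 = 0 then if v 1 = 0 then 0 else epsilon1
  else if v 1 = 0 then epsilon2 else epsilon3

section Laws

variable {τ : ℂ}

lemma epsilon2_neg_one_div (hτ : 0 < τ.im) : epsilon2 (-1 / τ) = τ ^ 4 * epsilon1 τ := by
  have hsq : epsilon2 (-1 / τ) = (theta1 (-1 / τ) ^ 2) ^ 2 * (theta3 (-1 / τ) ^ 2) ^ 2 / 16 := by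
    rw [epsilon2]
    ring
  rw [hsq, theta1_neg_one_div_sq hτ, theta3_neg_one_div_sq hτ, epsilon1]
  linear_combination (τ ^ 4 * theta2 τ ^ 4 * theta3 τ ^ 4 / 16) * Complex.I_pow_four

lemma epsilon1_neg_one_div (hτ : 0 < τ.im) : epsilon1 (-1 / τ) = τ ^ 4 * epsilon2 τ := by
  have hsq : epsilon1 (-1 / τ) = (theta2 (-1 / τ) ^ 2) ^ 2 * (theta3 (-1 / τ) ^ 2) ^ 2 / 16 := by
    rw [epsilon1]
    ring
  rw [hsq, theta2_neg_one_div_sq hτ, theta3_neg_one_div_sq hτ, epsilon2]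
  linear_combination (τ ^ 4 * theta1 τ ^ 4 * theta3 τ ^ 4 / 16) * Complex.I_pow_four

lemma epsilon3_neg_one_div (hτ : 0 < τ.im) : epsilon3 (-1 / τ) = τ ^ 4 * epsilon3 τ := by
  have hsq : epsilon3 (-1 / τ) =
      -((theta1 (-1 / τ) ^ 2) ^ 2 * (theta2 (-1 / τ) ^ 2) ^ 2) / 16 := by
    rw [epsilon3]
    ring
  rw [hsq, theta1_neg_one_div_sq hτ, theta2_neg_one_div_sq hτ, epsilon3]
  linear_combination -(τ ^ 4 * theta1 τ ^ 4 * theta2 τ ^ 4 / 16) * Complex.I_pow_four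

lemma epsilon1_add_one (τ : ℂ) : epsilon1 (τ + 1) = epsilon1 τ := by
  rw [epsilon1, epsilon1, theta2_add_one, theta3_add_one, mul_comm (theta3 τ ^ 4)]

lemma theta1_add_one_pow_four (τ : ℂ) : theta1 (τ + 1) ^ 4 = -theta1 τ ^ 4 := by
  rw [theta1_add_one, mul_pow, ← Complex.exp_nat_mul]
  simp [mul_div_cancel₀]

lemma epsilon2_add_one (τ : ℂ) : epsilon2 (τ + 1) = epsilon3 τ := by
  rw [epsilon2, epsilon3, theta1_add_one_pow_four, theta3_add_one, neg_mul]

lemma epsilon3_add_one (τ : ℂ) : epsilon3 (τ + 1) = epsilon2 τ := by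
  rw [epsilon2, epsilon3, theta1_add_one_pow_four, theta2_add_one, neg_mul, neg_neg]

lemma epsilonOrbit_neg_one_div (hτ : 0 < τ.im) (v : Fin 2 → ZMod 2) :
    epsilonOrbit v (-1 / τ) = τ ^ 4 * epsilonOrbit (v ᵥ* ModularGroup.S) τ := by
  have hv : v ᵥ* ModularGroup.S = ![v 1, v 0] := by decide +revert
  simp only [epsilonOrbit, hv, cons_val_zero, cons_val_one]
  split_ifs
  · simp
  · exact epsilon1_neg_one_div hτ
  · exact epsilon2_neg_one_div hτ
  · exact epsilon3_neg_one_div hτ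

lemma epsilonOrbit_add_one (v : Fin 2 → ZMod 2) :
    epsilonOrbit v (τ + 1) = epsilonOrbit (v ᵥ* ModularGroup.T) τ := by
  have hv : v ᵥ* ModularGroup.T = ![v 0, v 0 + v 1] := by decide +revert
  simp only [epsilonOrbit, hv, cons_val_zero, cons_val_one]
  by_cases h₀ : v 0 = 0
  · split_ifs <;> simp_all [epsilon1_add_one]
  · have hiff : v 0 + v 1 = 0 ↔ v 1 ≠ 0 := by decide +revert
    split_ifs <;> simp_all [epsilon2_add_one, epsilon3_add_one]

end Laws

/-! ### The action of `SL₂(ℤ)` -/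

lemma slash_S_apply_coe (F : ℂ → ℂ) (k : ℤ) (τ : ℍ) :
    ((fun z : ℍ ↦ F z) ∣[k] ModularGroup.S) τ = F (-1 / τ) * (τ : ℂ) ^ (-k) := by
  rw [SlashInvariantForm.slash_S_apply]
  simp [neg_div, inv_neg]

lemma slash_T_apply_coe (F : ℂ → ℂ) (k : ℤ) (τ : ℍ) :
    ((fun z : ℍ ↦ F z) ∣[k] ModularGroup.T) τ = F (τ + 1) := by
  rw [SL_slash_apply, UpperHalfPlane.modular_T_smul]
  simp [ModularGroup.denom_apply, ModularGroup.coe_T, add_comm]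

lemma slash_eq_vecMul_of_generators {N : ℕ} {k : ℤ} {F : (Fin 2 → ZMod N) → ℍ → ℂ}
    (hS : ∀ v, F v ∣[k] ModularGroup.S = F (v ᵥ* ModularGroup.S))
    (hT : ∀ v, F v ∣[k] ModularGroup.T = F (v ᵥ* ModularGroup.T))
    (γ : SL(2,ℤ)) (v : Fin 2 → ZMod N) : F v ∣[k] γ = F (v ᵥ* γ) := by
  have hmul (γ₁ γ₂ : SL(2,ℤ)) (v : Fin 2 → ZMod N) :
      (v ᵥ* γ₁ : Fin 2 → ZMod N) ᵥ* γ₂ =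
        (v ᵥ* (γ₁ * γ₂ : SL(2,ℤ)) : Fin 2 → ZMod N) := by
    rw [vecMul_vecMul, map_mul]
    rfl
  have hγ : γ ∈ Subgroup.closure {ModularGroup.S, ModularGroup.T} := by
    simp [SpecialLinearGroup.SL2Z_generators]
  induction hγ using Subgroup.closure_induction generalizing v with
  | mem γ hγ =>
    rcases hγ with rfl | rfl
    exacts [hS v, hT v]
  | one => simp
  | mul γ₁ γ₂ _ _ h₁ h₂ => rw [SlashAction.slash_mul, h₁, h₂, hmul]
  | inv γ _ h =>
    have hv : F (v ᵥ* (γ⁻¹ : SL(2,ℤ))) ∣[k] γ = F v := by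
      rw [h, hmul, inv_mul_cancel]
      simp
    rw [← hv, ← SlashAction.slash_mul, mul_inv_cancel, SlashAction.slash_one]

lemma epsilonOrbit_slash (γ : SL(2,ℤ)) (v : Fin 2 → ZMod 2) :
    (fun τ : ℍ ↦ epsilonOrbit v τ) ∣[(4 : ℤ)] γ = fun τ : ℍ ↦ epsilonOrbit (v ᵥ* γ) τ := by
  refine slash_eq_vecMul_of_generators (F := fun v (τ : ℍ) ↦ epsilonOrbit v τ)
    (fun v ↦ ?_) (fun v ↦ ?_) γ v
  · ext τ
    rw [slash_S_apply_coe, epsilonOrbit_neg_one_div τ.im_pos, mul_right_comm, ← zpow_natCast,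
      ← zpow_add₀ τ.ne_zero]
    simp
  · ext τ
    rw [slash_T_apply_coe, epsilonOrbit_add_one]

lemma isBoundedAtImInfty_epsilonOrbit (v : Fin 2 → ZMod 2) :
    IsBoundedAtImInfty (fun τ : ℍ ↦ epsilonOrbit v τ) := by
  have h₁ := tendsto_theta1_atImInfty.pow 4
  have h₂ := tendsto_theta2_atImInfty.pow 4
  have h₃ := tendsto_theta3_atImInfty.pow 4
  rw [epsilonOrbit]
  split_ifs
  · exact isBoundedAtImInfty_of_tendsto tendsto_const_nhds
  · exact isBoundedAtImInfty_of_tendsto ((h₂.mul h₃).div_const 16)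
  · exact isBoundedAtImInfty_of_tendsto ((h₁.mul h₃).div_const 16)
  · exact isBoundedAtImInfty_of_tendsto ((h₁.mul h₂).neg.div_const 16)

lemma vecMul_eq_of_mem_GammaUpper0 {γ : SL(2,ℤ)} (hγ : γ ∈ GammaUpper0 2) :
    ![1, 0] ᵥ* γ = (![1, 0] : Fin 2 → ZMod 2) := by
  have hγ₁ : (γ 0 1 : ZMod 2) = 0 := hγ
  have hdet : (γ 0 0 : ZMod 2) * γ 1 1 = 1 := by
    have h := congrArg (Int.cast (R := ZMod 2)) (det_fin_two γ.1 ▸ γ.2)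
    push_cast at h
    rwa [hγ₁, zero_mul, sub_zero] at h
  have hγ₀ : (γ 0 0 : ZMod 2) = 1 := by
    generalize (γ 0 0 : ZMod 2) = a, (γ 1 1 : ZMod 2) = d at hdet
    decide +revert
  ext i
  fin_cases i <;> simp [vecMul_eq_sum, hγ₀, hγ₁]

lemma epsilonOrbit_one_zero : epsilonOrbit ![1, 0] = epsilon2 := by simp [epsilonOrbit]

/-- `ε₂` is a modular form of weight `4` over `Γ^0(2)`: there is a modular form of weight `4`
over `Γ^0(2)` (holomorphic on `ℍ`, holomorphic at the cusps, transforming with weight `4` under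
`Γ^0(2)`) that coincides with `ε₂` on the upper half-plane. -/
theorem epsilon2_modular_form_weight_four_GammaUpper0_two :
    ∃ F : ModularForm (GammaUpper0 2) 4, ∀ τ : ℍ, F τ = epsilon2 (τ : ℂ) := by
  have hslash (γ : SL(2,ℤ)) :
      (fun τ : ℍ ↦ epsilon2 τ) ∣[(4 : ℤ)] γ = fun τ : ℍ ↦ epsilonOrbit (![1, 0] ᵥ* γ) τ := by
    rw [← epsilonOrbit_slash, epsilonOrbit_one_zero]
  refine ⟨{ toFun τ := epsilon2 τ
            slash_action_eq' := ?_
            holo' := mdifferentiable_epsilon2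
            bdd_at_cusps' := ?_ }, fun _ ↦ rfl⟩
  · rintro _ ⟨γ, hγ, rfl⟩
    refine (hslash γ).trans ?_
    rw [vecMul_eq_of_mem_GammaUpper0 hγ, epsilonOrbit_one_zero]
  · intro c hc
    rw [OnePoint.isBoundedAt_iff_forall_SL2Z (hc.mono (Subgroup.map_le_range _ _))]
    intro γ _
    rw [hslash]
    exact isBoundedAtImInfty_epsilonOrbit _
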